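/- (Harris's polarization inequality on the polydisc.) Let m ≥ 2, N ≥ 1, let L : (ℂ^N)^m → ℂ be a symmetric m-linear form, and let P(z) = L(z,…,z) be the associated m-homogeneous polynomial. Then sup_{z,y ∈ closed unit polydisc of ℂ^N} |L(z,…,z,y)| ≤ (m/(m-1))^{m-1} · sup_{z ∈ closed unit polydisc of ℂ^N} |P(z)|, where L(z,…,z,y) has z in the first m-1 arguments and y in the last. -/

import Mathlib

open Finset

/-!
Symmetry makes `(n + 1) • L(z, …, z, y)` the derivative at `0` of `f t = P(z + t y)`, where
`P w = L(w, …, w)`. If `z` and `y` lie in an absolutely convex set `S`, then `z + t y` lies in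
`(1 + |t|) S`, so `f` is bounded by `(1 + r) ^ (n + 1) * sup_S |P|` on the circle `|t| = r`, and
Cauchy's estimate bounds `|L(z, …, z, y)|` by `(1 + r) ^ (n + 1) / ((n + 1) * r) * sup_S |P|`.
The radius `r = 1 / n` minimises this factor.
-/

section AlongLine

variable {𝕜 ι F : Type*} {E : ι → Type*} [∀ i, AddCommGroup (E i)]

theorem map_add_smul_eq_map_add_linearDeriv_add {R : Type*} [CommSemiring R]
    [∀ i, Module R (E i)] [AddCommGroup F] [Module R F] [Fintype ι] [DecidableEq ι]
    (L : MultilinearMap R E F) (x h : ∀ i, E i) (t : R) :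
    L (x + t • h) = L x + t • L.linearDeriv x h +
      ∑ s : Finset ι with 2 ≤ #s, t ^ #s • L (s.piecewise h x) := by
  rw [L.map_add_eq_map_add_linearDeriv_add, map_smul]
  congr 1
  refine sum_congr rfl fun s _ => ?_
  have scale_on_s :
      s.piecewise (t • h) x = s.piecewise (fun i => t • s.piecewise h x i) (s.piecewise h x) := by
    ext i
    by_cases hi : i ∈ s <;> simp [hi]
  rw [scale_on_s, L.map_piecewise_smul, prod_const]

variable [NontriviallyNormedField 𝕜] [∀ i, Module 𝕜 (E i)] [NormedAddCommGroup F] [NormedSpace 𝕜 F]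

theorem hasDerivAt_multilinearMap_add_smul_zero [Fintype ι] [DecidableEq ι]
    (L : MultilinearMap 𝕜 E F) (x h : ∀ i, E i) :
    HasDerivAt (fun t : 𝕜 => L (x + t • h)) (L.linearDeriv x h) 0 := by
  have higher_order : HasDerivAt
      (fun t : 𝕜 => ∑ s : Finset ι with 2 ≤ #s, t ^ #s • L (s.piecewise h x)) 0 0 := by
    rw [← sum_const_zero (s := {s : Finset ι | 2 ≤ #s})]
    refine HasDerivAt.fun_sum fun s hs => ?_
    have two_le_card : 2 ≤ #s := (mem_filter.1 hs).2
    simpa [show #s - 1 ≠ 0 by lia] using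
      (hasDerivAt_pow #s (0 : 𝕜)).smul_const (L (s.piecewise h x))
  have first_order :
      HasDerivAt (fun t : 𝕜 => L x + t • L.linearDeriv x h) (L.linearDeriv x h) 0 := by
    simpa using ((hasDerivAt_id (0 : 𝕜)).smul_const (L.linearDeriv x h)).const_add (L x)
  simp only [map_add_smul_eq_map_add_linearDeriv_add]
  simpa only [add_zero] using first_order.fun_add higher_order

theorem differentiable_multilinearMap_add_smul [Finite ι] (L : MultilinearMap 𝕜 E F)
    (x h : ∀ i, E i) : Differentiable 𝕜 fun t : 𝕜 => L (x + t • h) := by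
  classical
  cases nonempty_fintype ι
  simp only [map_add_smul_eq_map_add_linearDeriv_add]
  fun_prop

end AlongLine

section Symmetric

variable {R ι E F : Type*} [DecidableEq ι] [Semiring R]
  [AddCommMonoid E] [Module R E] [AddCommMonoid F] [Module R F]
  {L : MultilinearMap R (fun _ : ι => E) F}

theorem map_update_const_eq_of_symmetric (hsym : ∀ (σ : Equiv.Perm ι) v, L (v ∘ σ) = L v)
    (z y : E) (i j : ι) :
    L (Function.update (fun _ => z) i y) = L (Function.update (fun _ => z) j y) := by
  have swap_slots : Function.update (fun _ => z) i y =
      Function.update (fun _ => z) j y ∘ Equiv.swap i j := by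
    rw [Function.update_comp_equiv, Equiv.symm_swap, Equiv.swap_apply_right]
    rfl
  exact (congrArg L swap_slots).trans (hsym _ _)

theorem linearDeriv_const_eq_card_nsmul [Fintype ι]
    (hsym : ∀ (σ : Equiv.Perm ι) v, L (v ∘ σ) = L v) (z y : E) (j : ι) :
    L.linearDeriv (fun _ => z) (fun _ => y) =
      Fintype.card ι • L (Function.update (fun _ => z) j y) := by
  simp only [L.linearDeriv_apply, map_update_const_eq_of_symmetric hsym z y _ j, sum_const,
    card_univ]

end Symmetric

section AbsolutelyConvex

variable {ι E F : Type*} [AddCommGroup E] [Module ℂ E] [Module ℝ E] [IsScalarTower ℝ ℂ E]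
  [NormedAddCommGroup F] [NormedSpace ℂ F] {S : Set E} {z y : E} {M : ℝ}

open scoped Pointwise in
theorem add_smul_mem_one_add_norm_smul (hbal : Balanced ℂ S) (hconv : Convex ℝ S)
    (hz : z ∈ S) (hy : y ∈ S) (t : ℂ) : z + t • y ∈ (1 + ‖t‖) • S := by
  have smul_mem : t • y ∈ ‖t‖ • S :=
    hbal.smul_mono (norm_norm t).ge (Set.smul_mem_smul_set hy)
  rw [hconv.add_smul zero_le_one (norm_nonneg t), one_smul]
  exact Set.add_mem_add hz smul_mem

theorem norm_map_add_smul_le [Fintype ι] {L : MultilinearMap ℂ (fun _ : ι => E) F}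
    (hbal : Balanced ℂ S) (hconv : Convex ℝ S) (hM : ∀ w ∈ S, ‖L fun _ => w‖ ≤ M)
    (hz : z ∈ S) (hy : y ∈ S) (t : ℂ) :
    ‖L fun _ => z + t • y‖ ≤ (1 + ‖t‖) ^ Fintype.card ι * M := by
  obtain ⟨w, hw, hwt⟩ := add_smul_mem_one_add_norm_smul hbal hconv hz hy t
  have homogeneous : L (fun _ => z + t • y) = (1 + ‖t‖) ^ Fintype.card ι • L fun _ => w := by
    simpa only [← hwt, MultilinearMap.coe_restrictScalars, prod_const, card_univ] using
      (L.restrictScalars ℝ).map_smul_univ (fun _ => 1 + ‖t‖) (fun _ => w)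
  rw [homogeneous, norm_smul, norm_pow, Real.norm_of_nonneg (by positivity)]
  gcongr
  exact hM w hw

theorem card_mul_norm_map_update_le [Fintype ι] [DecidableEq ι]
    {L : MultilinearMap ℂ (fun _ : ι => E) F} (hsym : ∀ (σ : Equiv.Perm ι) v, L (v ∘ σ) = L v)
    (hbal : Balanced ℂ S) (hconv : Convex ℝ S) (hM : ∀ w ∈ S, ‖L fun _ => w‖ ≤ M)
    (hz : z ∈ S) (hy : y ∈ S) (j : ι) {r : ℝ} (hr : 0 < r) :
    Fintype.card ι * ‖L (Function.update (fun _ => z) j y)‖ ≤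
      (1 + r) ^ Fintype.card ι * M / r := by
  have deriv_eq : deriv (fun t : ℂ => L fun _ => z + t • y) 0 =
      Fintype.card ι • L (Function.update (fun _ => z) j y) :=
    (hasDerivAt_multilinearMap_add_smul_zero L _ _).deriv.trans
      (linearDeriv_const_eq_card_nsmul hsym z y j)
  have bound_on_circle (t : ℂ) (ht : t ∈ Metric.sphere 0 r) :
      ‖L fun _ => z + t • y‖ ≤ (1 + r) ^ Fintype.card ι * M :=
    mem_sphere_zero_iff_norm.1 ht ▸ norm_map_add_smul_le hbal hconv hM hz hy t
  have cauchy := Complex.norm_deriv_le_of_forall_mem_sphere_norm_le hr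
    (differentiable_multilinearMap_add_smul L (fun _ => z) (fun _ => y)).diffContOnCl
    bound_on_circle
  calc
    Fintype.card ι * ‖L (Function.update (fun _ => z) j y)‖ =
        ‖deriv (fun t : ℂ => L fun _ => z + t • y) 0‖ := by
      rw [deriv_eq, RCLike.norm_nsmul ℂ, nsmul_eq_mul]
    _ ≤ (1 + r) ^ Fintype.card ι * M / r := cauchy

theorem norm_map_snoc_le_of_symmetric {n : ℕ} (hn : 1 ≤ n)
    {L : MultilinearMap ℂ (fun _ : Fin (n + 1) => E) F}
    (hsym : ∀ (σ : Equiv.Perm (Fin (n + 1))) v, L (v ∘ σ) = L v)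
    (hbal : Balanced ℂ S) (hconv : Convex ℝ S) (hM : ∀ w ∈ S, ‖L fun _ => w‖ ≤ M)
    (hz : z ∈ S) (hy : y ∈ S) :
    ‖L (Fin.snoc (fun _ : Fin n => z) y)‖ ≤ (((n : ℝ) + 1) / n) ^ n * M := by
  have n_pos : (0 : ℝ) < n := by exact_mod_cast hn
  have snoc_eq_update : (Fin.snoc (fun _ : Fin n => z) y : Fin (n + 1) → E) =
      Function.update (fun _ => z) (Fin.last n) y := by
    rw [← Fin.update_snoc_last z]
    congr 1
    exact funext <| Fin.lastCases (by simp) (by simp)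
  have optimal_radius : (1 + 1 / (n : ℝ)) ^ (n + 1) * M / (1 / n) =
      (n + 1) * ((((n : ℝ) + 1) / n) ^ n * M) := by
    rw [one_add_div n_pos.ne', pow_succ]
    field_simp
  have scaled := card_mul_norm_map_update_le hsym hbal hconv hM hz hy (Fin.last n)
    (one_div_pos.2 n_pos)
  rw [Fintype.card_fin, optimal_radius, Nat.cast_add_one, ← snoc_eq_update] at scaled
  exact le_of_mul_le_mul_left scaled (by positivity)

theorem harris_polarization_general {n : ℕ} (hn : 1 ≤ n)
    (L : MultilinearMap ℂ (fun _ : Fin (n + 1) => E) F)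
    (hsym : ∀ (σ : Equiv.Perm (Fin (n + 1))) (v : Fin (n + 1) → E), L (v ∘ σ) = L v)
    (hbal : Balanced ℂ S) (hconv : Convex ℝ S)
    (hbdd : BddAbove ((fun z => ‖L fun _ => z‖) '' S)) :
    (⨆ z ∈ S, ⨆ y ∈ S, ‖L (Fin.snoc (fun _ : Fin n => z) y)‖) ≤
      (((n : ℝ) + 1) / n) ^ n * ⨆ z ∈ S, ‖L fun _ => z‖ := by
  have le_sup : ∀ w ∈ S, ‖L fun _ => w‖ ≤ ⨆ z ∈ S, ‖L fun _ => z‖ := by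
    refine le_ciSup₂ (f := fun z (_ : z ∈ S) => ‖L fun _ => z‖) (hbdd.mono ?_)
    exact Set.iUnion_subset fun w => Set.range_subset_iff.2 fun hw => ⟨w, hw, rfl⟩
  have bound_nonneg : 0 ≤ (((n : ℝ) + 1) / n) ^ n * ⨆ z ∈ S, ‖L fun _ => z‖ :=
    mul_nonneg (by positivity)
      (Real.iSup_nonneg fun _ => Real.iSup_nonneg fun _ => norm_nonneg _)
  exact Real.iSup_le (fun z => Real.iSup_le (fun hz => Real.iSup_le (fun y => Real.iSup_le
    (fun hy => norm_map_snoc_le_of_symmetric hn hsym hbal hconv le_sup hz hy)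
    bound_nonneg) bound_nonneg) bound_nonneg) bound_nonneg

end AbsolutelyConvex

section Polydisc

variable {𝕜 ι κ F : Type*}

theorem multilinearMap_apply_eq_sum_single {R : Type*} [CommSemiring R] [AddCommMonoid F]
    [Module R F] [Fintype ι] [Fintype κ] [DecidableEq ι] [DecidableEq κ]
    (L : MultilinearMap R (fun _ : ι => κ → R) F) (v : ι → κ → R) :
    L v = ∑ k : ι → κ, (∏ i, v i (k i)) • L fun i => Pi.single (k i) 1 := by
  have expand : v = fun i => ∑ j, v i j • Pi.single j (1 : R) :=
    funext fun i => pi_eq_sum_univ' (v i)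
  conv_lhs => rw [expand, L.map_sum]
  exact sum_congr rfl fun k _ => L.map_smul_univ _ _

variable [NormedField 𝕜]

theorem polydisc_eq_closedBall [Fintype κ] :
    {z : κ → 𝕜 | ∀ j, ‖z j‖ ≤ 1} = Metric.closedBall 0 1 := by
  ext z
  rw [mem_closedBall_zero_iff, pi_norm_le_iff_of_nonneg zero_le_one, Set.mem_ofPred_eq]

theorem bddAbove_norm_map_const_of_isBounded [Finite ι] [Finite κ]
    [SeminormedAddCommGroup F] [NormedSpace 𝕜 F] (L : MultilinearMap 𝕜 (fun _ : ι => κ → 𝕜) F)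
    {s : Set (κ → 𝕜)} (hs : Bornology.IsBounded s) :
    BddAbove ((fun z => ‖L fun _ => z‖) '' s) := by
  classical
  cases nonempty_fintype ι
  cases nonempty_fintype κ
  obtain ⟨C, norm_le⟩ := hs.exists_norm_le
  refine ⟨∑ k : ι → κ, C ^ Fintype.card ι * ‖L fun i => Pi.single (k i) 1‖, ?_⟩
  rintro _ ⟨z, hz, rfl⟩
  dsimp only
  rw [multilinearMap_apply_eq_sum_single L]
  refine norm_sum_le_of_le _ fun k _ => ?_
  rw [norm_smul, norm_prod]
  gcongr
  calc
    ∏ i, ‖z (k i)‖ ≤ ∏ _ : ι, C := by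
      gcongr
      exact (norm_le_pi_norm z _).trans (norm_le z hz)
    _ = C ^ Fintype.card ι := by rw [prod_const, card_univ]

end Polydisc

/-- **Harris's polarization inequality on the polydisc.** Let `m = n+1 ≥ 2`, let `L`
be a symmetric `m`-linear form on `ℂ^N` and `P(z) = L(z,…,z)`. Then
`sup_{z,y ∈ polydisc} |L(z,…,z,y)| ≤ (m/(m-1))^{m-1} · sup_{z ∈ polydisc} |P(z)|`. -/
theorem harris_polarization (n N : ℕ) (hn : 1 ≤ n) (hN : 1 ≤ N)
    (L : MultilinearMap ℂ (fun _ : Fin (n + 1) => Fin N → ℂ) ℂ)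
    (hsym : ∀ (σ : Equiv.Perm (Fin (n + 1))) (z : Fin (n + 1) → Fin N → ℂ),
      L (z ∘ σ) = L z) :
    (⨆ z ∈ {z : Fin N → ℂ | ∀ j, ‖z j‖ ≤ 1},
        ⨆ y ∈ {y : Fin N → ℂ | ∀ j, ‖y j‖ ≤ 1},
          ‖L (Fin.snoc (fun _ : Fin n => z) y)‖)
      ≤ (((n : ℝ) + 1) / n) ^ n *
        ⨆ z ∈ {z : Fin N → ℂ | ∀ j, ‖z j‖ ≤ 1},
          ‖L fun _ => z‖ := by
  rw [polydisc_eq_closedBall]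
  exact harris_polarization_general hn L hsym balanced_closedBall_zero (convex_closedBall 0 1)
    (bddAbove_norm_map_const_of_isBounded L Metric.isBounded_closedBall)
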